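/- Let $S$, $K$, and the data $\alpha_k,l_k$ be as in the standing assumptions, with $g=\min(a_0, l_1-\alpha_1,\dots,l_m-\alpha_m)$, and for $z\in\mathbf{C}$ let $T_z$ denote the analytic family with kernel factor $(\min(|t_1|,\dots,|t_n|,S^*(\mathbf{t})))^z$. Suppose $0>s_0>\max(-g,\,-1/\max(o(S),2))$. Then for every $z$ on the line $\mathrm{Re}(z)=s_0$ and every $2<p<\infty$, there exists a constant $C_{s_0}$ (independent of $z$ and $p$) such that $\|T_z f\|_{L^p(\mathbf{R}^{n+1})}\le C_{s_0}\|f\|_{L^p(\mathbf{R}^{n+1})}$. -/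

import Mathlib

open MeasureTheory Real Filter Topology Set
open scoped ENNReal

noncomputable section

namespace Paper

variable {n m : ℕ}

/-- The monomial `t ^ α`. -/
def monomial (α : Fin n → ℕ) (t : Fin n → ℝ) : ℝ := ∏ i, t i ^ α i

/-- `S` is real-analytic near the origin with Taylor coefficient family `c`:
its Taylor series at the origin converges to it near `0`. -/
def HasTaylorSeriesAtOrigin (S : (Fin n → ℝ) → ℝ) (c : (Fin n → ℕ) → ℝ) : Prop :=
  ∀ᶠ t in 𝓝 (0 : Fin n → ℝ), HasSum (fun α => c α * monomial α t) (S t)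

/-- The Newton polyhedron of the Taylor coefficient family `c`: the convex hull of
the octants above the exponents of the nonzero coefficients. -/
def newtonPolyhedron (c : (Fin n → ℕ) → ℝ) : Set (Fin n → ℝ) :=
  convexHull ℝ {x : Fin n → ℝ | ∃ α : Fin n → ℕ, c α ≠ 0 ∧ ∀ i, (α i : ℝ) ≤ x i}

/-- The vertices (extreme points) of the Newton polyhedron. -/
def newtonVertices (c : (Fin n → ℕ) → ℝ) : Set (Fin n → ℝ) :=
  Set.extremePoints ℝ (newtonPolyhedron c)

/-- `f^*`, the sum of the absolute values of the vertex monomials. -/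
def starFn (c : (Fin n → ℕ) → ℝ) (t : Fin n → ℝ) : ℝ :=
  ∑' v : newtonVertices c, ∏ i, |t i| ^ ((v : Fin n → ℝ) i)

/-- Compact (exposed) faces of the Newton polyhedron; a vertex is a face of dimension zero. -/
def IsCompactFace (c : (Fin n → ℕ) → ℝ) (F : Set (Fin n → ℝ)) : Prop :=
  IsExposed ℝ (newtonPolyhedron c) F ∧ F.Nonempty ∧ IsCompact F

/-- The face polynomial `f_F(t) = ∑_{α ∈ F} f_α t^α`. -/
def facePoly (c : (Fin n → ℕ) → ℝ) (F : Set (Fin n → ℝ)) (t : Fin n → ℝ) : ℝ :=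
  ∑' α : {α : Fin n → ℕ // (fun i => (α i : ℝ)) ∈ F}, c α.1 * monomial α.1 t

/-- The order of vanishing of `g` at `x`. -/
def vanishingOrder (g : (Fin n → ℝ) → ℝ) (x : Fin n → ℝ) : ℕ∞ :=
  sSup {k : ℕ∞ | ∀ j : ℕ, (j : ℕ∞) < k → iteratedFDeriv ℝ j g x = 0}

/-- `o(f)`: the maximum order of a zero of a compact face polynomial on `(ℝ ∖ {0})^n`
(`0` if there are no such zeroes). -/
def newtonOrder (c : (Fin n → ℕ) → ℝ) : ℕ∞ :=
  sSup {k : ℕ∞ | ∃ F : Set (Fin n → ℝ), IsCompactFace c F ∧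
    ∃ x : Fin n → ℝ, (∀ i, x i ≠ 0) ∧ facePoly c F x = 0 ∧
      k ≤ vanishingOrder (facePoly c F) x}

/-- The Euclidean norm `|t_k|` of the `k`-th group of variables. -/
def grpNorm (grp : Fin n → Fin m) (k : Fin m) (t : Fin n → ℝ) : ℝ :=
  Real.sqrt (∑ i ∈ Finset.univ.filter (fun i => grp i = k), t i ^ 2)

/-- The weight `∏_k |t_k|^{-α_k}`. -/
def kernelWeight (grp : Fin n → Fin m) (a : Fin m → ℝ) (t : Fin n → ℝ) : ℝ :=
  ∏ k, grpNorm grp k t ^ (-(a k))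

/-- The measure `dμ = ∏_k |t_k|^{-α_k} dm`, `m` being Lebesgue measure. -/
def fracMeasure (grp : Fin n → Fin m) (a : Fin m → ℝ) : Measure (Fin n → ℝ) :=
  volume.withDensity fun t => ENNReal.ofReal (kernelWeight grp a t)

/-- The characterization (1.5) of the sublevel growth exponents `a₀`, `d₀`. -/
def IsSublevelExponent (grp : Fin n → Fin m) (a : Fin m → ℝ) (c : (Fin n → ℕ) → ℝ)
    (a₀ : ℝ) (d₀ : ℕ) : Prop :=
  0 < a₀ ∧ d₀ ≤ n - 1 ∧ ∃ r₀ > (0 : ℝ), ∀ r : ℝ, 0 < r → r < r₀ →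
    ∃ b B : ℝ, 0 < b ∧ 0 < B ∧ ∀ ε : ℝ, 0 < ε → ε < 1/2 →
      ENNReal.ofReal (b * ε ^ a₀ * |Real.log ε| ^ d₀) <
          fracMeasure grp a {t | (∀ i, t i ∈ Set.Ioo 0 r) ∧ starFn c t < ε} ∧
        fracMeasure grp a {t | (∀ i, t i ∈ Set.Ioo 0 r) ∧ starFn c t < ε} <
          ENNReal.ofReal (B * ε ^ a₀ * |Real.log ε| ^ d₀)

/-- The kernel bounds (1.2a)-(1.2b): `K` is `C¹` off the coordinate hyperplanes,
`|K(t)| ≤ C ∏_k |t_k|^{-α_k}` and `|∂_{t_i} K(t)| ≤ C |t_i|⁻¹ ∏_k |t_k|^{-α_k}`. -/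
def KernelBounds (grp : Fin n → Fin m) (a : Fin m → ℝ) (K : (Fin n → ℝ) → ℝ) : Prop :=
  ContDiffOn ℝ 1 K {t | ∀ i, t i ≠ 0} ∧
  ∃ C : ℝ, ∀ t : Fin n → ℝ, (∀ i, t i ≠ 0) →
    |K t| ≤ C * kernelWeight grp a t ∧
    ∀ i : Fin n, |fderiv ℝ K t (Pi.single i 1)| ≤ C / |t i| * kernelWeight grp a t

/-- The averaging operator (1.1),
`Tf(x, x_{n+1}) = ∫ f(x - t, x_{n+1} - S(t)) K(t) dt`. -/
def radonOp (S K : (Fin n → ℝ) → ℝ) (f : (Fin (n+1) → ℝ) → ℂ) :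
    (Fin (n+1) → ℝ) → ℂ :=
  fun x => ∫ t : Fin n → ℝ, (K t : ℂ) * f (fun j => x j - Fin.snoc (α := fun _ => ℝ) t (S t) j)

/-- The Fourier transform on `ℝ^N`. -/
def fourierTransform {N : ℕ} (g : (Fin N → ℝ) → ℂ) (ξ : Fin N → ℝ) : ℂ :=
  ∫ x : Fin N → ℝ,
    Complex.exp (-2 * (Real.pi : ℂ) * Complex.I * ((∑ i, x i * ξ i : ℝ) : ℂ)) * g x

/-- The inverse Fourier transform on `ℝ^N`. -/
def fourierInv {N : ℕ} (g : (Fin N → ℝ) → ℂ) (x : Fin N → ℝ) : ℂ :=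
  ∫ ξ : Fin N → ℝ,
    Complex.exp (2 * (Real.pi : ℂ) * Complex.I * ((∑ i, x i * ξ i : ℝ) : ℂ)) * g ξ

/-- The Bessel potential `(I - Δ)^{β/2} g`, defined via the Fourier transform. -/
def besselPotential {N : ℕ} (β : ℝ) (g : (Fin N → ℝ) → ℂ) : (Fin N → ℝ) → ℂ :=
  fun x => fourierInv
    (fun ξ => (((1 + ∑ i, ξ i ^ 2) ^ (β / 2) : ℝ) : ℂ) * fourierTransform g ξ) x

/-- `T` is bounded from `L^p(ℝ^N)` to the `L^p` Sobolev space `L^p_β(ℝ^N)`,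
whose norm is `‖(I - Δ)^{β/2} f‖_{L^p}`. -/
def BddLpSobolev {N : ℕ} (p β : ℝ)
    (T : ((Fin N → ℝ) → ℂ) → ((Fin N → ℝ) → ℂ)) : Prop :=
  ∃ C : ℝ, 0 ≤ C ∧ ∀ f : SchwartzMap (Fin N → ℝ) ℂ,
    eLpNorm (besselPotential β (T ⇑f)) (ENNReal.ofReal p) volume ≤
      ENNReal.ofReal C * eLpNorm (⇑f) (ENNReal.ofReal p) volume

/-- `min(|t₁|,...,|tₙ|, S^*(t))`. -/
def minFactor (c : (Fin n → ℕ) → ℝ) (t : Fin n → ℝ) : ℝ :=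
  min (⨅ i, |t i|) (starFn c t)

/-- The analytic family (3.1):
`T_z f(x) = e^{z²} ∫ (min(|t₁|,...,|tₙ|,S^*(t)))^z f(x - t, x_{n+1} - S(t)) K(t) dt`. -/
def radonOpZ (S K : (Fin n → ℝ) → ℝ) (c : (Fin n → ℕ) → ℝ) (z : ℂ)
    (f : (Fin (n+1) → ℝ) → ℂ) : (Fin (n+1) → ℝ) → ℂ :=
  fun x => Complex.exp (z ^ 2) *
    ∫ t : Fin n → ℝ,
      ((minFactor c t : ℂ) ^ z) * (K t : ℂ) * f (fun j => x j - Fin.snoc (α := fun _ => ℝ) t (S t) j)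

/-- The Fourier transform (3.8) of the convolution kernel `ν_z` of `T_z`. -/
def nuHatZ (S K : (Fin n → ℝ) → ℝ) (c : (Fin n → ℕ) → ℝ) (z : ℂ)
    (lam : Fin (n+1) → ℝ) : ℂ :=
  Complex.exp (z ^ 2) *
    ∫ t : Fin n → ℝ,
      Complex.exp (Complex.I *
          (((∑ i, lam i.castSucc * t i) + lam (Fin.last n) * S t : ℝ) : ℂ)) *
        ((minFactor c t : ℂ) ^ z) * (K t : ℂ)

/-!
On the line `Re z = s₀` the kernel of `T_z` is dominated by `min(|t₁|, …, |tₙ|, S^*)^{s₀} dμ`, so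
by Young's inequality for the measure carried by the graph of `S` it suffices that this measure has
finite mass near the origin. Since `s₀ < 0`, the density is at most `∑ᵢ |tᵢ|^{s₀} + (S^*)^{s₀}`.
The terms `|tᵢ|^{s₀}` are `μ`-integrable because `s₀ > -1` and `s₀ > αₖ - lₖ`, as one sees by
replacing `∏ₖ |tₖ|^{-αₖ}` by a product of powers of the coordinates; `(S^*)^{s₀}` is `μ`-integrable
because `s₀ > -a₀`, by the sublevel estimate.
-/

lemma rpow_lintegral_le_measure_univ_rpow_mul {α : Type*} [MeasurableSpace α] {ρ : Measure α}
    {F : α → ℝ≥0∞} (hF : AEMeasurable F ρ) {q : ℝ} (hq : 1 ≤ q) :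
    (∫⁻ y, F y ∂ρ) ^ q ≤ ρ univ ^ (q - 1) * ∫⁻ y, F y ^ q ∂ρ := by
  have hq0 : 0 < q := by linarith
  have hHolder := eLpNorm_le_eLpNorm_mul_rpow_measure_univ (p := 1) (q := ENNReal.ofReal q)
    (by simpa using hq) hF.aestronglyMeasurable
  rw [eLpNorm_one_eq_lintegral_enorm, eLpNorm_eq_lintegral_rpow_enorm_toReal (by simpa using hq0)
    ENNReal.ofReal_ne_top, ENNReal.toReal_ofReal hq0.le] at hHolder
  simp only [enorm_eq_self, ENNReal.toReal_one] at hHolder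
  calc (∫⁻ y, F y ∂ρ) ^ q
      ≤ ((∫⁻ y, F y ^ q ∂ρ) ^ (1 / q) * ρ univ ^ (1 / 1 - 1 / q)) ^ q :=
        ENNReal.rpow_le_rpow hHolder hq0.le
    _ = ρ univ ^ (q - 1) * ∫⁻ y, F y ^ q ∂ρ := by
        rw [ENNReal.mul_rpow_of_nonneg _ _ hq0.le, ← ENNReal.rpow_mul, ← ENNReal.rpow_mul,
          one_div_mul_cancel hq0.ne', ENNReal.rpow_one, mul_comm]
        congr 2
        field_simp

section Young

variable {G : Type*} [MeasurableSpace G] [AddGroup G] [MeasurableAdd₂ G] [MeasurableNeg G]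
  {μ ρ : Measure G} [SFinite μ] [μ.IsAddRightInvariant] [SFinite ρ] {F : G → ℝ≥0∞}

lemma aemeasurable_comp_sub_prod (hF : AEMeasurable F μ) :
    AEMeasurable (fun w : G × G => F (w.1 - w.2)) (μ.prod ρ) :=
  hF.comp_quasiMeasurePreserving <| Measure.quasiMeasurePreserving_fst.comp
    (measurePreserving_sub_prod μ ρ).quasiMeasurePreserving

lemma ae_aemeasurable_comp_sub (hF : AEMeasurable F μ) :
    ∀ᵐ x ∂μ, AEMeasurable (fun y => F (x - y)) ρ :=
  (aemeasurable_comp_sub_prod hF).aestronglyMeasurable.prodMk_left.mono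
    fun _ hx => hx.aemeasurable

lemma lintegral_rpow_lintegral_comp_sub_le (hF : AEMeasurable F μ) {q : ℝ} (hq : 1 ≤ q) :
    ∫⁻ x, (∫⁻ y, F (x - y) ∂ρ) ^ q ∂μ ≤ ρ univ ^ q * ∫⁻ x, F x ^ q ∂μ := by
  have hsub := (aemeasurable_comp_sub_prod (ρ := ρ) hF).pow_const q
  calc ∫⁻ x, (∫⁻ y, F (x - y) ∂ρ) ^ q ∂μ
      ≤ ∫⁻ x, ρ univ ^ (q - 1) * ∫⁻ y, F (x - y) ^ q ∂ρ ∂μ := by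
        refine lintegral_mono_ae ?_
        filter_upwards [ae_aemeasurable_comp_sub (ρ := ρ) hF] with x hx
        exact rpow_lintegral_le_measure_univ_rpow_mul hx hq
    _ = ρ univ ^ (q - 1) * ∫⁻ x, ∫⁻ y, F (x - y) ^ q ∂ρ ∂μ :=
        lintegral_const_mul'' _ hsub.lintegral_prod_right'
    _ = ρ univ ^ (q - 1) * ∫⁻ y, ∫⁻ x, F (x - y) ^ q ∂μ ∂ρ := by
        rw [lintegral_lintegral_swap hsub]
    _ = ρ univ ^ (q - 1) * ((∫⁻ x, F x ^ q ∂μ) * ρ univ) := by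
        simp only [lintegral_sub_right_eq_self (fun x => F x ^ q), lintegral_const]
    _ = ρ univ ^ (q - 1 + 1) * ∫⁻ x, F x ^ q ∂μ := by
        rw [ENNReal.rpow_add_of_nonneg _ _ (by linarith) zero_le_one, ENNReal.rpow_one]
        ring
    _ = ρ univ ^ q * ∫⁻ x, F x ^ q ∂μ := by rw [sub_add_cancel]

lemma ae_lintegral_comp_sub_le :
    ∀ᵐ x ∂μ, ∫⁻ y, F (x - y) ∂ρ ≤ ρ univ * essSup F μ := by
  have hsub : ∀ᵐ w ∂μ.prod ρ, F (w.1 - w.2) ≤ essSup F μ :=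
    (Measure.quasiMeasurePreserving_fst.comp
      (measurePreserving_sub_prod μ ρ).quasiMeasurePreserving).ae (ENNReal.ae_le_essSup F)
  filter_upwards [Measure.ae_ae_of_ae_prod hsub] with x hx
  calc ∫⁻ y, F (x - y) ∂ρ ≤ ∫⁻ _, essSup F μ ∂ρ := lintegral_mono_ae hx
    _ = ρ univ * essSup F μ := by rw [lintegral_const, mul_comm]

theorem eLpNorm_lintegral_comp_sub_le (hF : AEMeasurable F μ) {p : ℝ≥0∞} (hp : 1 ≤ p) :
    eLpNorm (fun x => ∫⁻ y, F (x - y) ∂ρ) p μ ≤ ρ univ * eLpNorm F p μ := by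
  rcases eq_or_ne p ∞ with rfl | hp_top
  · simp only [eLpNorm_exponent_top, eLpNormEssSup, enorm_eq_self]
    exact essSup_le_of_ae_le _ ae_lintegral_comp_sub_le
  have hp_pos : p ≠ 0 := (zero_lt_one.trans_le hp).ne'
  have hq : 1 ≤ p.toReal := by simpa using ENNReal.toReal_mono hp_top hp
  have hq_pos : 0 < p.toReal := by linarith
  simp only [eLpNorm_eq_lintegral_rpow_enorm_toReal hp_pos hp_top, enorm_eq_self]
  calc (∫⁻ x, (∫⁻ y, F (x - y) ∂ρ) ^ p.toReal ∂μ) ^ (1 / p.toReal)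
      ≤ (ρ univ ^ p.toReal * ∫⁻ x, F x ^ p.toReal ∂μ) ^ (1 / p.toReal) := by
        gcongr
        exact lintegral_rpow_lintegral_comp_sub_le hF hq
    _ = ρ univ * (∫⁻ x, F x ^ p.toReal ∂μ) ^ (1 / p.toReal) := by
        rw [ENNReal.mul_rpow_of_nonneg _ _ (by positivity), ← ENNReal.rpow_mul,
          mul_one_div_cancel hq_pos.ne', ENNReal.rpow_one]

theorem eLpNorm_integral_smul_comp_sub_le {X 𝕜 E : Type*} [MeasurableSpace X] {ν : Measure X}
    [NormedField 𝕜] [NormedAddCommGroup E] [NormedSpace ℝ E] [NormedSpace 𝕜 E]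
    {k : X → 𝕜} (hk : Integrable k ν) {γ : X → G} (hγ : AEMeasurable γ ν)
    {f : G → E} (hf : AEStronglyMeasurable f μ) {p : ℝ≥0∞} (hp : 1 ≤ p) :
    eLpNorm (fun x => ∫ t, k t • f (x - γ t) ∂ν) p μ ≤ (∫⁻ t, ‖k t‖ₑ ∂ν) * eLpNorm f p μ := by
  set κ : Measure X := ν.withDensity fun t => ‖k t‖ₑ with hκ
  have hγκ : AEMeasurable γ κ := hγ.mono_ac (withDensity_absolutelyContinuous _ _)
  have hκ_univ : κ univ = ∫⁻ t, ‖k t‖ₑ ∂ν := by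
    rw [hκ, withDensity_apply _ .univ, Measure.restrict_univ]
  have : IsFiniteMeasure κ := isFiniteMeasure_withDensity hk.2.ne
  have hpointwise : ∀ᵐ x ∂μ, ‖∫ t, k t • f (x - γ t) ∂ν‖ₑ ≤ ∫⁻ y, ‖f (x - y)‖ₑ ∂κ.map γ := by
    filter_upwards [ae_aemeasurable_comp_sub (ρ := κ.map γ) hf.enorm] with x hx
    rw [lintegral_map' hx hγκ]
    calc ‖∫ t, k t • f (x - γ t) ∂ν‖ₑ ≤ ∫⁻ t, ‖k t‖ₑ * ‖f (x - γ t)‖ₑ ∂ν := by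
          simpa only [enorm_smul] using
            enorm_integral_le_lintegral_enorm (fun t => k t • f (x - γ t))
      _ = ∫⁻ t, ‖f (x - γ t)‖ₑ ∂κ :=
          (lintegral_withDensity_eq_lintegral_mul₀' hk.1.enorm (hx.comp_aemeasurable hγκ)).symm
  calc eLpNorm (fun x => ∫ t, k t • f (x - γ t) ∂ν) p μ
      ≤ eLpNorm (fun x => ∫⁻ y, ‖f (x - y)‖ₑ ∂κ.map γ) p μ :=
        eLpNorm_mono_enorm_ae hpointwise
    _ ≤ (κ.map γ) univ * eLpNorm (fun x => ‖f x‖ₑ) p μ :=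
        eLpNorm_lintegral_comp_sub_le hf.enorm hp
    _ = (∫⁻ t, ‖k t‖ₑ ∂ν) * eLpNorm f p μ := by
        rw [Measure.map_apply_of_aemeasurable hγκ .univ, preimage_univ, hκ_univ, eLpNorm_enorm]
end Young

lemma abs_log_pow_le_rpow_neg {ε τ : ℝ} (hε : 0 < ε) (hε1 : ε ≤ 1) (hτ : 0 < τ) (d : ℕ) :
    |log ε| ^ d ≤ (1 / τ) ^ d * ε ^ (-(d * τ)) := by
  have hlog : |log ε| ≤ 1 / τ * ε ^ (-τ) := by
    have h := (abs_log_mul_self_rpow_lt ε τ hε hε1 hτ).le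
    rw [abs_mul, abs_of_pos (rpow_pos_of_pos hε τ)] at h
    rwa [rpow_neg hε.le, ← div_eq_mul_inv, le_div_iff₀ (rpow_pos_of_pos hε τ)]
  calc |log ε| ^ d ≤ (1 / τ * ε ^ (-τ)) ^ d := by gcongr
    _ = (1 / τ) ^ d * ε ^ (-(d * τ)) := by
        rw [mul_pow, ← rpow_mul_natCast hε.le]
        congr 2
        ring

lemma exists_rpow_mul_abs_log_pow_le {a b : ℝ} (hba : b < a) (d : ℕ) :
    ∃ A, ∀ ε : ℝ, 0 < ε → ε ≤ 1 → ε ^ a * |log ε| ^ d ≤ A * ε ^ b := by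
  obtain ⟨τ, hτ, hdτ⟩ : ∃ τ > 0, d * τ ≤ a - b := by
    refine ⟨(a - b) / (d + 1), div_pos (by linarith) (by positivity), ?_⟩
    rw [mul_div_assoc', div_le_iff₀ (by positivity)]
    nlinarith
  refine ⟨(1 / τ) ^ d, fun ε hε hε1 => ?_⟩
  calc ε ^ a * |log ε| ^ d ≤ ε ^ a * ((1 / τ) ^ d * ε ^ (-(d * τ))) := by
        gcongr
        exact abs_log_pow_le_rpow_neg hε hε1 hτ d
    _ = (1 / τ) ^ d * ε ^ (a - d * τ) := by
        rw [sub_eq_add_neg, rpow_add hε]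
        ring
    _ ≤ (1 / τ) ^ d * ε ^ b :=
        mul_le_mul_of_nonneg_left
          (rpow_le_rpow_of_exponent_ge hε hε1 (by linarith)) (by positivity)

lemma lintegral_Ioi_mul_rpow_sub_one_lt_top {F : ℝ → ℝ≥0∞} {M : ℝ≥0∞} (hM : M ≠ ∞)
    (hFM : ∀ t, F t ≤ M) {R q b B : ℝ} (hR : 0 < R) (hq : 0 < q) (hqb : q < b)
    (hF : ∀ t, R < t → F t ≤ ENNReal.ofReal (B * t ^ (-b))) :
    ∫⁻ t in Ioi 0, F t * ENNReal.ofReal (t ^ (q - 1)) < ∞ := by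
  have hnear : IntegrableOn (fun t : ℝ => t ^ (q - 1)) (Ioc 0 R) :=
    (intervalIntegrable_iff_integrableOn_Ioc_of_le hR.le).1
      (intervalIntegral.intervalIntegrable_rpow' (by linarith))
  have htail : IntegrableOn (fun t : ℝ => B * t ^ (q - b - 1)) (Ioi R) :=
    (integrableOn_Ioi_rpow_of_lt (by linarith) hR).const_mul B
  rw [← Ioc_union_Ioi_eq_Ioi hR.le]
  refine (lintegral_union_le _ _ _).trans_lt <| ENNReal.add_lt_top.2 ⟨?_, ?_⟩
  · calc ∫⁻ t in Ioc 0 R, F t * ENNReal.ofReal (t ^ (q - 1))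
        ≤ ∫⁻ t in Ioc 0 R, M * ENNReal.ofReal (t ^ (q - 1)) := by
          gcongr
          exact hFM _
      _ = M * ∫⁻ t in Ioc 0 R, ENNReal.ofReal (t ^ (q - 1)) := lintegral_const_mul' _ _ hM
      _ < ∞ := ENNReal.mul_lt_top hM.lt_top hnear.setLIntegral_lt_top
  · refine (setLIntegral_mono' measurableSet_Ioi fun t (ht : R < t) => ?_).trans_lt
      htail.setLIntegral_lt_top
    have ht_pos : 0 < t := hR.trans ht
    calc F t * ENNReal.ofReal (t ^ (q - 1))
        ≤ ENNReal.ofReal (B * t ^ (-b)) * ENNReal.ofReal (t ^ (q - 1)) := by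
          gcongr
          exact hF t ht
      _ = ENNReal.ofReal (B * t ^ (q - b - 1)) := by
          rw [← ENNReal.ofReal_mul' (by positivity), mul_assoc, ← rpow_add ht_pos]
          congr 3
          ring

section Sublevel

variable {X : Type*} [MeasurableSpace X] {μ : Measure X} [IsFiniteMeasure μ] {φ : X → ℝ}

/-- Layer-cake formula for `φ⁻¹`, whose superlevel sets are sublevel sets of `φ`. -/
lemma lintegral_rpow_lt_top_of_measure_lt_le_rpow (hφ : AEMeasurable φ μ)
    (hφ_nonneg : ∀ x, 0 ≤ φ x) {b s B ε₀ : ℝ} (hs : s < 0) (hbs : 0 < b + s) (hε₀ : 0 < ε₀)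
    (hμ : ∀ ε, 0 < ε → ε < ε₀ → μ {x | φ x < ε} ≤ ENNReal.ofReal (B * ε ^ b)) :
    ∫⁻ x, ENNReal.ofReal (φ x ^ s) ∂μ < ∞ := by
  have hinv : ∀ x, φ x ^ s = (φ x)⁻¹ ^ (-s) := fun x => by
    rw [inv_rpow (hφ_nonneg x), rpow_neg (hφ_nonneg x), inv_inv]
  simp only [hinv]
  rw [lintegral_rpow_eq_lintegral_meas_lt_mul μ
    (Eventually.of_forall fun x => inv_nonneg.2 (hφ_nonneg x)) hφ.inv (neg_pos.2 hs)]
  refine ENNReal.mul_lt_top ENNReal.ofReal_lt_top <|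
    lintegral_Ioi_mul_rpow_sub_one_lt_top (measure_ne_top μ univ)
      (fun _ => measure_mono (subset_univ _)) (R := ε₀⁻¹) (b := b) (B := B)
      (inv_pos.2 hε₀) (neg_pos.2 hs) (by linarith) fun t ht => ?_
  have ht_pos : 0 < t := (inv_pos.2 hε₀).trans ht
  have hsublevel : {x | t < (φ x)⁻¹} ⊆ {x | φ x < t⁻¹} := fun x (hx : t < (φ x)⁻¹) =>
    (lt_inv_comm₀ ht_pos (inv_pos.1 (ht_pos.trans hx))).1 hx
  calc μ {x | t < (φ x)⁻¹} ≤ μ {x | φ x < t⁻¹} := measure_mono hsublevel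
    _ ≤ ENNReal.ofReal (B * t⁻¹ ^ b) := hμ t⁻¹ (inv_pos.2 ht_pos) (inv_lt_of_inv_lt₀ hε₀ ht)
    _ = ENNReal.ofReal (B * t ^ (-b)) := by rw [inv_rpow ht_pos.le, rpow_neg ht_pos.le]

theorem lintegral_rpow_lt_top_of_measure_lt_le_rpow_mul_log (hφ : AEMeasurable φ μ)
    (hφ_nonneg : ∀ x, 0 ≤ φ x) {a s B : ℝ} {d : ℕ} (hs : s < 0) (has : 0 < a + s)
    (hμ : ∀ ε, 0 < ε → ε < 1 / 2 →
      μ {x | φ x < ε} ≤ ENNReal.ofReal (B * ε ^ a * |log ε| ^ d)) :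
    ∫⁻ x, ENNReal.ofReal (φ x ^ s) ∂μ < ∞ := by
  obtain ⟨b, hsb, hba⟩ : ∃ b, -s < b ∧ b < a := exists_between (by linarith)
  obtain ⟨A, hA⟩ := exists_rpow_mul_abs_log_pow_le hba d
  refine lintegral_rpow_lt_top_of_measure_lt_le_rpow hφ hφ_nonneg hs (b := b) (B := |B| * A)
    (by linarith) one_half_pos fun ε hε hε_half => (hμ ε hε hε_half).trans ?_
  apply ENNReal.ofReal_le_ofReal
  calc B * ε ^ a * |log ε| ^ d ≤ |B| * (ε ^ a * |log ε| ^ d) := by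
        rw [mul_assoc]
        gcongr
        exact le_abs_self B
    _ ≤ |B| * (A * ε ^ b) :=
        mul_le_mul_of_nonneg_left (hA ε hε (by linarith)) (abs_nonneg B)
    _ = |B| * A * ε ^ b := by ring

end Sublevel

section Reflection

variable {ι : Type*} [Fintype ι]

lemma measurePreserving_sign_smul (ε : ι → ℤˣ) :
    MeasurePreserving fun (t : ι → ℝ) i => ε i • t i :=
  volume_preserving_pi (f := fun i (x : ℝ) => ε i • x) fun i => by
    rcases Int.units_eq_one_or (ε i) with h | h
    · simp only [h, one_smul]
      exact MeasurePreserving.id volume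
    · simpa [h] using Measure.measurePreserving_neg (volume : Measure ℝ)

lemma ae_forall_apply_ne_zero : ∀ᵐ t : ι → ℝ, ∀ i, t i ≠ 0 :=
  ae_all_iff.2 fun i => Measure.ae_eval_ne (fun _ => volume) i 0

lemma ball_ae_subset_iUnion_preimage_pi_Ioo (r : ℝ) :
    (Metric.ball 0 r : Set (ι → ℝ)) ≤ᵐ[volume]
      ⋃ ε : ι → ℤˣ, (fun t i => ε i • t i) ⁻¹' univ.pi fun _ => Ioo 0 r := by
  filter_upwards [ae_forall_apply_ne_zero] with t ht hball
  have hlt : ∀ i, |t i| < r := fun i =>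
    (norm_le_pi_norm t i).trans_lt (mem_ball_zero_iff.1 hball)
  have hsign : ∀ i, ∃ σ : ℤˣ, σ • t i = |t i| := fun i => by
    rcases abs_choice (t i) with h | h
    · exact ⟨1, by simp [h]⟩
    · exact ⟨-1, by simp [h]⟩
  choose ε hε using hsign
  refine mem_iUnion.2 ⟨ε, fun i _ => ?_⟩
  simpa only [hε] using ⟨abs_pos.2 (ht i), hlt i⟩

theorem lintegral_ball_le_of_comp_abs_eq {F : (ι → ℝ) → ℝ≥0∞} (hF : Measurable F)
    (hF_abs : ∀ t, F (fun i => |t i|) = F t) (r : ℝ) :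
    ∫⁻ t in Metric.ball 0 r, F t ≤
      2 ^ Fintype.card ι * ∫⁻ t in univ.pi fun _ => Ioo 0 r, F t := by
  have hF_sign : ∀ (ε : ι → ℤˣ) t, F (fun i => ε i • t i) = F t := fun ε t => by
    rw [← hF_abs, ← hF_abs t]
    congr! 2 with i
    rcases Int.units_eq_one_or (ε i) with h | h <;> simp [h]
  calc ∫⁻ t in Metric.ball 0 r, F t
      ≤ ∫⁻ t in ⋃ ε : ι → ℤˣ, (fun t i => ε i • t i) ⁻¹' univ.pi fun _ => Ioo 0 r, F t :=
        lintegral_mono_set' (ball_ae_subset_iUnion_preimage_pi_Ioo r)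
    _ ≤ ∑' ε : ι → ℤˣ, ∫⁻ t in (fun t i => ε i • t i) ⁻¹' univ.pi fun _ => Ioo 0 r, F t :=
        lintegral_iUnion_le _ _
    _ = ∑' _ : ι → ℤˣ, ∫⁻ t in univ.pi fun _ => Ioo 0 r, F t := by
        refine tsum_congr fun ε => ?_
        rw [← (measurePreserving_sign_smul ε).setLIntegral_comp_preimage
          (.univ_pi fun _ => measurableSet_Ioo) hF]
        simp only [hF_sign]
    _ = 2 ^ Fintype.card ι * ∫⁻ t in univ.pi fun _ => Ioo 0 r, F t := by
        simp

end Reflection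

section Weight

lemma exists_nonneg_lt_sum_fiber_eq {ι κ : Type*} [Fintype ι] [DecidableEq κ] (grp : ι → κ)
    {w : ι → ℝ} (hw : ∀ j, 0 < w j) {a : κ → ℝ} (ha : ∀ k, 0 ≤ a k)
    (haw : ∀ k, a k < ∑ j with grp j = k, w j) :
    ∃ b : ι → ℝ, (∀ j, 0 ≤ b j) ∧ (∀ j, b j < w j) ∧ ∀ k, ∑ j with grp j = k, b j = a k := by
  have hW : ∀ k, 0 < ∑ j with grp j = k, w j := fun k => (ha k).trans_lt (haw k)
  refine ⟨fun j => a (grp j) / (∑ i with grp i = grp j, w i) * w j, fun j => ?_, fun j => ?_,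
    fun k => ?_⟩
  · exact mul_nonneg (div_nonneg (ha _) (hW _).le) (hw j).le
  · exact mul_lt_of_lt_one_left (hw j) ((div_lt_one (hW _)).2 (haw _))
  · calc ∑ j with grp j = k, a (grp j) / (∑ i with grp i = grp j, w i) * w j
        = ∑ j with grp j = k, a k / (∑ i with grp i = k, w i) * w j :=
          Finset.sum_congr rfl fun j hj => by rw [(Finset.mem_filter.1 hj).2]
      _ = a k := by rw [← Finset.mul_sum, div_mul_cancel₀ _ (hW k).ne']

variable {grp : Fin n → Fin m} {a : Fin m → ℝ}

lemma grpNorm_nonneg (k : Fin m) (t : Fin n → ℝ) : 0 ≤ grpNorm grp k t :=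
  sqrt_nonneg _

lemma abs_le_grpNorm (t : Fin n → ℝ) (j : Fin n) : |t j| ≤ grpNorm grp (grp j) t :=
  abs_le_sqrt <| Finset.single_le_sum (f := fun i => t i ^ 2) (fun i _ => sq_nonneg _) (by simp)

lemma kernelWeight_nonneg (t : Fin n → ℝ) : 0 ≤ kernelWeight grp a t :=
  Finset.prod_nonneg fun k _ => rpow_nonneg (grpNorm_nonneg k t) _

lemma measurable_kernelWeight : Measurable (kernelWeight grp a) := by
  unfold kernelWeight grpNorm
  fun_prop

lemma kernelWeight_abs (t : Fin n → ℝ) :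
    kernelWeight grp a (fun i => |t i|) = kernelWeight grp a t := by
  simp only [kernelWeight, grpNorm, sq_abs]

lemma grpNorm_rpow_neg_le_prod {b : Fin n → ℝ} (hb : ∀ j, 0 ≤ b j) {t : Fin n → ℝ}
    (ht : ∀ j, t j ≠ 0) (k : Fin m) :
    grpNorm grp k t ^ (-∑ j with grp j = k, b j) ≤ ∏ j with grp j = k, |t j| ^ (-b j) := by
  calc grpNorm grp k t ^ (-∑ j with grp j = k, b j)
      = ∏ j with grp j = k, grpNorm grp k t ^ (-b j) := by
        simp only [rpow_neg (grpNorm_nonneg k t), Finset.prod_inv_distrib,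
          rpow_sum_of_nonneg (grpNorm_nonneg k t) fun j _ => hb j]
    _ ≤ ∏ j with grp j = k, |t j| ^ (-b j) := by
        refine Finset.prod_le_prod (fun j _ => rpow_nonneg (grpNorm_nonneg k t) _) fun j hj => ?_
        obtain rfl := (Finset.mem_filter.1 hj).2
        exact rpow_le_rpow_of_nonpos (abs_pos.2 (ht j)) (abs_le_grpNorm t j) (neg_nonpos.2 (hb j))

lemma kernelWeight_le_prod {b : Fin n → ℝ} (hb : ∀ j, 0 ≤ b j)
    (hba : ∀ k, ∑ j with grp j = k, b j = a k) {t : Fin n → ℝ} (ht : ∀ j, t j ≠ 0) :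
    kernelWeight grp a t ≤ ∏ j, |t j| ^ (-b j) := by
  rw [← Finset.prod_fiberwise Finset.univ grp, kernelWeight]
  refine Finset.prod_le_prod (fun k _ => rpow_nonneg (grpNorm_nonneg k t) _) fun k _ => ?_
  rw [← hba k]
  exact grpNorm_rpow_neg_le_prod hb ht k

lemma lintegral_prod_rpow_lt_top {ι : Type*} [Fintype ι] {e : ι → ℝ} (he : ∀ j, -1 < e j)
    (r : ℝ) :
    ∫⁻ t in univ.pi fun _ : ι => Ioo 0 r, ENNReal.ofReal (∏ j, t j ^ e j) < ∞ := by
  have hfactor : ∀ j, IntegrableOn (fun x : ℝ => x ^ e j) (Ioo 0 r) := fun j =>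
    (intervalIntegral.intervalIntegrable_rpow' (he j)).1.mono_set Ioo_subset_Ioc_self
  rw [volume_pi, Measure.restrict_pi_pi]
  exact (Integrable.fintype_prod hfactor).lintegral_lt_top

lemma setLIntegral_fracMeasure {s : Set (Fin n → ℝ)} (hs : MeasurableSet s)
    (F : (Fin n → ℝ) → ℝ≥0∞) :
    ∫⁻ t in s, F t ∂fracMeasure grp a = ∫⁻ t in s, ENNReal.ofReal (kernelWeight grp a t) * F t :=
  setLIntegral_withDensity_eq_setLIntegral_mul_non_measurable volume
    measurable_kernelWeight.ennreal_ofReal F hs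
    (Eventually.of_forall fun _ => ENNReal.ofReal_lt_top)

lemma measurableSet_pi_Ioo (r : ℝ) : MeasurableSet (univ.pi fun _ : Fin n => Ioo 0 r) :=
  .univ_pi fun _ => measurableSet_Ioo

/-- The exponent `a k` can be distributed over the coordinates of the `k`-th group so that each
coordinate keeps an exponent above `-1`. -/
theorem lintegral_prod_rpow_fracMeasure_lt_top (ha : ∀ k, 0 ≤ a k) {e : Fin n → ℝ}
    (he : ∀ j, -1 < e j) (hae : ∀ k, a k < ∑ j with grp j = k, (e j + 1)) (r : ℝ) :
    ∫⁻ t in univ.pi fun _ => Ioo 0 r, ENNReal.ofReal (∏ j, t j ^ e j) ∂fracMeasure grp a < ∞ := by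
  obtain ⟨b, hb, hbe, hba⟩ :=
    exists_nonneg_lt_sum_fiber_eq grp (fun j => neg_lt_iff_pos_add.1 (he j)) ha hae
  rw [setLIntegral_fracMeasure (measurableSet_pi_Ioo r)]
  refine (setLIntegral_mono' (measurableSet_pi_Ioo r) fun t ht => ?_).trans_lt
    (lintegral_prod_rpow_lt_top (e := fun j => -b j + e j) (fun j => by linarith [hbe j]) r)
  have ht_pos : ∀ j, 0 < t j := fun j => (ht j (mem_univ j)).1
  rw [← ENNReal.ofReal_mul (kernelWeight_nonneg t)]
  apply ENNReal.ofReal_le_ofReal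
  calc kernelWeight grp a t * ∏ j, t j ^ e j
      ≤ (∏ j, t j ^ (-b j)) * ∏ j, t j ^ e j := by
        have hweight := kernelWeight_le_prod hb hba fun j => (ht_pos j).ne'
        simp only [abs_of_pos (ht_pos _)] at hweight
        exact mul_le_mul_of_nonneg_right hweight
          (Finset.prod_nonneg fun j _ => rpow_nonneg (ht_pos j).le _)
    _ = ∏ j, t j ^ (-b j + e j) := by
        simp only [← Finset.prod_mul_distrib, rpow_add (ht_pos _)]

lemma fracMeasure_pi_Ioo_lt_top (ha : ∀ k, 0 ≤ a k)
    (hal : ∀ k, a k < (Finset.univ.filter fun j => grp j = k).card) (r : ℝ) :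
    fracMeasure grp a (univ.pi fun _ => Ioo 0 r) < ∞ := by
  simpa using lintegral_prod_rpow_fracMeasure_lt_top (e := fun _ => 0) ha (by simp)
    (by simpa using hal) r

lemma lintegral_rpow_fracMeasure_lt_top (ha : ∀ k, 0 ≤ a k) {s : ℝ} (hs : -1 < s) (hs0 : s ≤ 0)
    (has : ∀ k, a k - s < (Finset.univ.filter fun j => grp j = k).card) (i : Fin n) (r : ℝ) :
    ∫⁻ t in univ.pi fun _ => Ioo 0 r, ENNReal.ofReal (|t i| ^ s) ∂fracMeasure grp a < ∞ := by
  have hsingle : ∀ j, s ≤ (Pi.single i s : Fin n → ℝ) j ∧ (Pi.single i s : Fin n → ℝ) j ≤ 0 := by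
    intro j
    rcases eq_or_ne j i with rfl | hj
    · simpa using hs0
    · simpa [hj] using hs0
  have hsum : ∀ k, s ≤ ∑ j with grp j = k, (Pi.single i s : Fin n → ℝ) j := fun k =>
    calc s = ∑ j, (Pi.single i s : Fin n → ℝ) j := by simp
      _ ≤ ∑ j with grp j = k, (Pi.single i s : Fin n → ℝ) j := by
        rw [← Finset.sum_filter_add_sum_filter_not Finset.univ fun j => grp j = k]
        exact add_le_of_nonpos_right (Finset.sum_nonpos fun j _ => (hsingle j).2)
  refine (setLIntegral_congr_fun (measurableSet_pi_Ioo r) fun t ht => ?_).trans_lt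
    (lintegral_prod_rpow_fracMeasure_lt_top (e := Pi.single i s) ha
      (fun j => hs.trans_le (hsingle j).1) (fun k => ?_) r)
  · have hti := (ht i (mem_univ i)).1
    rw [Fintype.prod_eq_single i fun j hj => by simp [hj], Pi.single_eq_same, abs_of_pos hti]
  · rw [Finset.sum_add_distrib, Finset.sum_const, nsmul_one]
    linarith [has k, hsum k]

end Weight

section MinFactor

/-- A vertex lying above the exponent `α` equals `α`, being the midpoint of `α` and `2x - α`. -/
lemma countable_newtonVertices (c : (Fin n → ℕ) → ℝ) : (newtonVertices c).Countable := by
  refine (countable_range fun (α : Fin n → ℕ) i => (α i : ℝ)).mono fun x hx => ?_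
  obtain ⟨α, hα, hαx⟩ := extremePoints_convexHull_subset hx
  have hα_mem : (fun i => (α i : ℝ)) ∈ newtonPolyhedron c :=
    subset_convexHull ℝ _ ⟨α, hα, fun _ => le_rfl⟩
  have hreflect_mem : (fun i => 2 * x i - α i) ∈ newtonPolyhedron c :=
    subset_convexHull ℝ _ ⟨α, hα, fun i => by linarith [hαx i]⟩
  refine ⟨α, hx.2 hα_mem hreflect_mem ⟨1 / 2, 1 / 2, by norm_num, by norm_num, by norm_num, ?_⟩⟩
  ext i
  simp only [Pi.add_apply, Pi.smul_apply, smul_eq_mul]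
  ring

variable {c : (Fin n → ℕ) → ℝ}

lemma starFn_nonneg (t : Fin n → ℝ) : 0 ≤ starFn c t :=
  tsum_nonneg fun _ => Finset.prod_nonneg fun _ _ => rpow_nonneg (abs_nonneg _) _

lemma measurable_starFn : Measurable (starFn c) := by
  have : Countable (newtonVertices c) := (countable_newtonVertices c).to_subtype
  unfold starFn
  fun_prop

lemma starFn_abs (t : Fin n → ℝ) : starFn c (fun i => |t i|) = starFn c t := by
  simp only [starFn, abs_abs]

lemma minFactor_nonneg (t : Fin n → ℝ) : 0 ≤ minFactor c t :=
  le_min (iInf_nonneg fun _ => abs_nonneg _) (starFn_nonneg t)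

lemma measurable_minFactor : Measurable (minFactor c) :=
  (Measurable.iInf fun i => (measurable_pi_apply i).abs).min measurable_starFn

lemma minFactor_abs (t : Fin n → ℝ) : minFactor c (fun i => |t i|) = minFactor c t := by
  simp only [minFactor, abs_abs, starFn_abs]

lemma minFactor_rpow_le_sum_add [Nonempty (Fin n)] (s : ℝ) (t : Fin n → ℝ) :
    minFactor c t ^ s ≤ (∑ i, |t i| ^ s) + starFn c t ^ s := by
  have hstar := rpow_nonneg (starFn_nonneg (c := c) t) s
  have habs : ∀ i ∈ Finset.univ, 0 ≤ |t i| ^ s := fun i _ => rpow_nonneg (abs_nonneg _) _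
  obtain ⟨i, hi⟩ := exists_eq_ciInf_of_finite (f := fun i => |t i|)
  rcases min_choice (⨅ i, |t i|) (starFn c t) with h | h
  · rw [minFactor, h, ← hi]
    linarith [Finset.single_le_sum habs (Finset.mem_univ i)]
  · rw [minFactor, h]
    linarith [Finset.sum_nonneg habs]

lemma norm_minFactor_cpow {z : ℂ} (hz : z.re ≠ 0) (t : Fin n → ℝ) :
    ‖(minFactor c t : ℂ) ^ z‖ = minFactor c t ^ z.re :=
  Complex.norm_cpow_eq_rpow_re_of_nonneg (minFactor_nonneg t) hz

end MinFactor

section Kernel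

variable {grp : Fin n → Fin m} {a : Fin m → ℝ} {c : (Fin n → ℕ) → ℝ}

lemma lintegral_starFn_rpow_fracMeasure_lt_top {r s a₀ B : ℝ} {d : ℕ}
    (hr : fracMeasure grp a (univ.pi fun _ => Ioo 0 r) < ∞) (hs : s < 0) (has : 0 < a₀ + s)
    (hB : ∀ ε, 0 < ε → ε < 1 / 2 →
      fracMeasure grp a {t | (∀ i, t i ∈ Ioo 0 r) ∧ starFn c t < ε} ≤
        ENNReal.ofReal (B * ε ^ a₀ * |log ε| ^ d)) :
    ∫⁻ t in univ.pi fun _ => Ioo 0 r, ENNReal.ofReal (starFn c t ^ s) ∂fracMeasure grp a < ∞ := by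
  have : IsFiniteMeasure ((fracMeasure grp a).restrict (univ.pi fun _ => Ioo 0 r)) :=
    isFiniteMeasure_restrict.2 hr.ne
  refine lintegral_rpow_lt_top_of_measure_lt_le_rpow_mul_log (B := B) (d := d)
    measurable_starFn.aemeasurable starFn_nonneg hs has fun ε hε hε_half => ?_
  rw [Measure.restrict_apply' (measurableSet_pi_Ioo r)]
  refine (measure_mono fun t ht => ?_).trans (hB ε hε hε_half)
  exact ⟨fun i => ht.2 i (mem_univ i), ht.1⟩

lemma lintegral_minFactor_rpow_fracMeasure_lt_top [Nonempty (Fin n)] {r s : ℝ}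
    (hcoord : ∀ i, ∫⁻ t in univ.pi fun _ => Ioo 0 r,
      ENNReal.ofReal (|t i| ^ s) ∂fracMeasure grp a < ∞)
    (hstar : ∫⁻ t in univ.pi fun _ => Ioo 0 r,
      ENNReal.ofReal (starFn c t ^ s) ∂fracMeasure grp a < ∞) :
    ∫⁻ t in univ.pi fun _ => Ioo 0 r,
      ENNReal.ofReal (minFactor c t ^ s) ∂fracMeasure grp a < ∞ := by
  have hcoord_nonneg : ∀ (t : Fin n → ℝ) i, i ∈ Finset.univ → 0 ≤ |t i| ^ s :=
    fun _ _ _ => rpow_nonneg (abs_nonneg _) s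
  calc ∫⁻ t in univ.pi fun _ => Ioo 0 r, ENNReal.ofReal (minFactor c t ^ s) ∂fracMeasure grp a
      ≤ ∫⁻ t in univ.pi fun _ => Ioo 0 r, ((∑ i, ENNReal.ofReal (|t i| ^ s)) +
          ENNReal.ofReal (starFn c t ^ s)) ∂fracMeasure grp a := by
        gcongr with t
        rw [← ENNReal.ofReal_sum_of_nonneg (hcoord_nonneg t),
          ← ENNReal.ofReal_add (Finset.sum_nonneg (hcoord_nonneg t))
            (rpow_nonneg (starFn_nonneg t) s)]
        exact ENNReal.ofReal_le_ofReal (minFactor_rpow_le_sum_add s t)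
    _ = (∑ i, ∫⁻ t in univ.pi fun _ => Ioo 0 r, ENNReal.ofReal (|t i| ^ s) ∂fracMeasure grp a) +
          ∫⁻ t in univ.pi fun _ => Ioo 0 r,
            ENNReal.ofReal (starFn c t ^ s) ∂fracMeasure grp a := by
        rw [lintegral_add_left (by fun_prop), lintegral_finsetSum _ fun i _ => by fun_prop]
    _ < ∞ := ENNReal.add_lt_top.2 ⟨ENNReal.sum_lt_top.2 fun i _ => hcoord i, hstar⟩

lemma lintegral_ball_minFactor_rpow_fracMeasure_lt_top {r s : ℝ}
    (h : ∫⁻ t in univ.pi fun _ => Ioo 0 r,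
      ENNReal.ofReal (minFactor c t ^ s) ∂fracMeasure grp a < ∞) :
    ∫⁻ t in Metric.ball 0 r, ENNReal.ofReal (minFactor c t ^ s) ∂fracMeasure grp a < ∞ := by
  rw [setLIntegral_fracMeasure (measurableSet_pi_Ioo r)] at h
  rw [setLIntegral_fracMeasure measurableSet_ball]
  refine (lintegral_ball_le_of_comp_abs_eq ?_ (fun t => ?_) r).trans_lt
    (ENNReal.mul_lt_top (by simp) h)
  · exact measurable_kernelWeight.ennreal_ofReal.mul
      (measurable_minFactor.pow_const s).ennreal_ofReal
  · rw [kernelWeight_abs, minFactor_abs]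

theorem exists_lintegral_ball_minFactor_rpow_fracMeasure_lt_top [Nonempty (Fin n)]
    (ha : ∀ k, 0 ≤ a k) {a₀ s : ℝ} {d₀ : ℕ} (ha₀ : IsSublevelExponent grp a c a₀ d₀)
    (hs : -1 < s) (hs0 : s < 0) (has : 0 < a₀ + s)
    (hal : ∀ k, a k - s < (Finset.univ.filter fun j => grp j = k).card) :
    ∃ r₀ > 0, ∀ r, 0 < r → r < r₀ →
      ∫⁻ t in Metric.ball 0 r, ENNReal.ofReal (minFactor c t ^ s) ∂fracMeasure grp a < ∞ := by
  obtain ⟨-, -, r₀, hr₀, hsublevel⟩ := ha₀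
  refine ⟨r₀, hr₀, fun r hr hrr₀ => ?_⟩
  obtain ⟨_, B, -, -, hB⟩ := hsublevel r hr hrr₀
  exact lintegral_ball_minFactor_rpow_fracMeasure_lt_top <|
    lintegral_minFactor_rpow_fracMeasure_lt_top
      (fun i => lintegral_rpow_fracMeasure_lt_top ha hs hs0.le hal i r)
      (lintegral_starFn_rpow_fracMeasure_lt_top
        (fracMeasure_pi_Ioo_lt_top ha (fun k => by linarith [hal k]) r) hs0 has
        fun ε hε hε_half => (hB ε hε hε_half).2.le)

lemma setLIntegral_enorm_minFactor_cpow_mul_le {V : Set (Fin n → ℝ)} (hV : MeasurableSet V)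
    {z : ℂ} (hz : z.re ≠ 0) {K : (Fin n → ℝ) → ℝ} {A : ℝ}
    (hK : ∀ᵐ t, |K t| ≤ A * kernelWeight grp a t) :
    ∫⁻ t in V, ‖(minFactor c t : ℂ) ^ z * (K t : ℂ)‖ₑ ≤ ENNReal.ofReal A *
      ∫⁻ t in V, ENNReal.ofReal (minFactor c t ^ z.re) ∂fracMeasure grp a := by
  rw [setLIntegral_fracMeasure hV, ← lintegral_const_mul' _ _ ENNReal.ofReal_ne_top]
  refine lintegral_mono_ae <| (ae_restrict_of_ae hK).mono fun t ht => ?_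
  have hmin := rpow_nonneg (minFactor_nonneg (c := c) t) z.re
  rw [← ENNReal.ofReal_mul (kernelWeight_nonneg t),
    ← ENNReal.ofReal_mul' (mul_nonneg (kernelWeight_nonneg t) hmin), ← ofReal_norm,
    norm_mul, norm_minFactor_cpow hz, Complex.norm_real, norm_eq_abs]
  apply ENNReal.ofReal_le_ofReal
  calc minFactor c t ^ z.re * |K t|
      ≤ minFactor c t ^ z.re * (A * kernelWeight grp a t) := mul_le_mul_of_nonneg_left ht hmin
    _ = A * (kernelWeight grp a t * minFactor c t ^ z.re) := by ring

lemma enorm_exp_sq_le (z : ℂ) : ‖Complex.exp (z ^ 2)‖ₑ ≤ ENNReal.ofReal (exp (z.re ^ 2)) := by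
  rw [← ofReal_norm, Complex.norm_exp]
  gcongr
  rw [sq z, Complex.mul_re]
  nlinarith [sq_nonneg z.im]

lemma measurable_monomial (α : Fin n → ℕ) : Measurable (monomial α) := by
  unfold monomial
  fun_prop

lemma HasTaylorSeriesAtOrigin.exists_aemeasurable_restrict_ball {S : (Fin n → ℝ) → ℝ}
    (hS : HasTaylorSeriesAtOrigin S c) :
    ∃ δ > 0, ∀ r ≤ δ, AEMeasurable S (volume.restrict (Metric.ball 0 r)) := by
  obtain ⟨δ, hδ, hsum⟩ := Metric.eventually_nhds_iff_ball.1 hS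
  refine ⟨δ, hδ, fun r hr => aemeasurable_of_tendsto_metrizable_ae atTop
    (f := fun s t => ∑ α ∈ s, c α * monomial α t) (fun s => ?_) ?_⟩
  · exact Finset.aemeasurable_fun_sum s fun α _ => (measurable_monomial α).aemeasurable.const_mul _
  · exact ae_restrict_of_forall_mem measurableSet_ball fun t ht =>
      hsum t (Metric.ball_subset_ball hr ht)

lemma aemeasurable_snoc {μ : Measure (Fin n → ℝ)} {S : (Fin n → ℝ) → ℝ} (hS : AEMeasurable S μ) :
    AEMeasurable (fun t => (Fin.snoc t (S t) : Fin (n + 1) → ℝ)) μ := by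
  refine aemeasurable_pi_lambda _ fun j => Fin.lastCases ?_ (fun i => ?_) j
  · simpa using hS
  · simpa using (measurable_pi_apply i).aemeasurable

theorem eLpNorm_radonOpZ_le {S K : (Fin n → ℝ) → ℝ} {V : Set (Fin n → ℝ)}
    (hV : MeasurableSet V) (hS : AEMeasurable S (volume.restrict V))
    (hK : AEStronglyMeasurable K) (hKV : Function.support K ⊆ V) {A : ℝ}
    (hKA : ∀ᵐ t, |K t| ≤ A * kernelWeight grp a t) {z : ℂ} (hz : z.re ≠ 0)
    (hfin : ∫⁻ t in V, ENNReal.ofReal (minFactor c t ^ z.re) ∂fracMeasure grp a < ∞)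
    {f : (Fin (n + 1) → ℝ) → ℂ} (hf : AEStronglyMeasurable f) {p : ℝ≥0∞} (hp : 1 ≤ p) :
    eLpNorm (radonOpZ S K c z f) p volume ≤ ENNReal.ofReal (exp (z.re ^ 2)) *
      (ENNReal.ofReal A * ∫⁻ t in V, ENNReal.ofReal (minFactor c t ^ z.re) ∂fracMeasure grp a) *
        eLpNorm f p volume := by
  set k : (Fin n → ℝ) → ℂ := fun t => (minFactor c t : ℂ) ^ z * (K t : ℂ)
  have hk_le := setLIntegral_enorm_minFactor_cpow_mul_le (c := c) hV hz hKA
  have hk_int : IntegrableOn k V :=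
    ⟨((measurable_minFactor.complex_ofReal.pow_const z).aestronglyMeasurable.mul
      (Complex.continuous_ofReal.comp_aestronglyMeasurable hK)).restrict,
      hk_le.trans_lt (ENNReal.mul_lt_top ENNReal.ofReal_lt_top hfin)⟩
  have hradon : radonOpZ S K c z f = Complex.exp (z ^ 2) •
      fun x => ∫ t in V, k t • f (x - (Fin.snoc t (S t) : Fin (n + 1) → ℝ)) := by
    ext x
    rw [radonOpZ, Pi.smul_apply, smul_eq_mul]
    congr 1
    refine (setIntegral_eq_integral_of_forall_compl_eq_zero fun t ht => ?_).symm
    simp [Function.notMem_support.1 fun h => ht (hKV h)]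
  calc eLpNorm (radonOpZ S K c z f) p volume
      = ‖Complex.exp (z ^ 2)‖ₑ * eLpNorm
          (fun x => ∫ t in V, k t • f (x - (Fin.snoc t (S t) : Fin (n + 1) → ℝ))) p volume := by
        rw [hradon, eLpNorm_const_smul]
    _ ≤ ‖Complex.exp (z ^ 2)‖ₑ * ((∫⁻ t in V, ‖k t‖ₑ) * eLpNorm f p volume) := by
        gcongr
        exact eLpNorm_integral_smul_comp_sub_le hk_int (aemeasurable_snoc hS) hf hp
    _ ≤ _ := by
        rw [mul_assoc]
        gcongr
        exact enorm_exp_sq_le z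

variable {K : (Fin n → ℝ) → ℝ}

lemma KernelBounds.aestronglyMeasurable (hK : KernelBounds grp a K) : AEStronglyMeasurable K := by
  have hmeas : MeasurableSet {t : Fin n → ℝ | ∀ i, t i ≠ 0} := by measurability
  have hrestrict : volume.restrict {t : Fin n → ℝ | ∀ i, t i ≠ 0} = volume :=
    Measure.restrict_eq_self_of_ae_mem ae_forall_apply_ne_zero
  exact hrestrict ▸ hK.1.continuousOn.aestronglyMeasurable hmeas

lemma KernelBounds.exists_ae_abs_le (hK : KernelBounds grp a K) :
    ∃ A, ∀ᵐ t, |K t| ≤ A * kernelWeight grp a t := by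
  obtain ⟨-, A, hA⟩ := hK
  exact ⟨A, ae_forall_apply_ne_zero.mono fun t ht => (hA t ht).1⟩

end Kernel

theorem lemma_3_1_general
    (n m : ℕ) (hn : 0 < n) (grp : Fin n → Fin m)
    (l : Fin m → ℕ) (hl : ∀ k, l k = (Finset.univ.filter (fun i => grp i = k)).card)
    (a : Fin m → ℝ) (ha : ∀ k, 0 ≤ a k)
    (S : (Fin n → ℝ) → ℝ) (c : (Fin n → ℕ) → ℝ) (hSc : HasTaylorSeriesAtOrigin S c)
    (a₀ : ℝ) (d₀ : ℕ) (ha₀ : IsSublevelExponent grp a c a₀ d₀)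
    (g : ℝ) (hg : g = min a₀ (⨅ k, ((l k : ℝ) - a k)))
    (s₀ : ℝ) (hs₀neg : s₀ < 0) (hs₀ : max (-g) (-1) < s₀) :
    ∃ V ∈ 𝓝 (0 : Fin n → ℝ), ∀ K : (Fin n → ℝ) → ℝ, AEStronglyMeasurable K →
      Function.support K ⊆ V → ∀ A : ℝ, (∀ᵐ t, |K t| ≤ A * kernelWeight grp a t) →
      ∃ C : ℝ, 0 ≤ C ∧ ∀ z : ℂ, z.re = s₀ → ∀ p : ℝ≥0∞, 1 ≤ p →
        ∀ f : (Fin (n+1) → ℝ) → ℂ, AEStronglyMeasurable f →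
          eLpNorm (radonOpZ S K c z f) p volume ≤ ENNReal.ofReal C * eLpNorm f p volume := by
  have : Nonempty (Fin n) := ⟨⟨0, hn⟩⟩
  obtain ⟨hgs, hs₁⟩ := max_lt_iff.1 hs₀
  have hga₀ : g ≤ a₀ := hg ▸ min_le_left _ _
  have hgl : ∀ k, g ≤ l k - a k := fun k =>
    (hg ▸ min_le_right _ _).trans (ciInf_le (finite_range _).bddBelow k)
  obtain ⟨r₀, hr₀, hint⟩ := exists_lintegral_ball_minFactor_rpow_fracMeasure_lt_top ha ha₀ hs₁
    hs₀neg (by linarith) fun k => by linarith [hgl k, congrArg (Nat.cast (R := ℝ)) (hl k)]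
  obtain ⟨δ, hδ, hS⟩ := hSc.exists_aemeasurable_restrict_ball
  obtain ⟨r, hr, hr_lt⟩ := exists_between (lt_min hr₀ hδ)
  obtain ⟨hrr₀, hrδ⟩ := lt_min_iff.1 hr_lt
  have hfin := hint r hr hrr₀
  refine ⟨Metric.ball 0 r, Metric.ball_mem_nhds 0 hr, fun K hK hKV A hKA => ?_⟩
  set M := ENNReal.ofReal (exp (s₀ ^ 2)) * (ENNReal.ofReal A *
    ∫⁻ t in Metric.ball 0 r, ENNReal.ofReal (minFactor c t ^ s₀) ∂fracMeasure grp a) with hM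
  have hM_top : M ≠ ∞ := by finiteness
  refine ⟨M.toReal, ENNReal.toReal_nonneg, fun z hz p hp f hf => ?_⟩
  rw [ENNReal.ofReal_toReal hM_top, hM, ← hz]
  exact eLpNorm_radonOpZ_le measurableSet_ball (hS r hrδ.le) hK hKV hKA (hz ▸ hs₀neg.ne)
    (hz ▸ hfin) hf hp

/-- **Lemma 3.1.** For `0 > s₀ > max(-g, -1/max(o(S),2))`, provided `K` is supported
in a sufficiently small neighborhood of the origin, on the line `Re(z) = s₀` one has
`‖T_z f‖_{L^p} ≤ C_{s₀} ‖f‖_{L^p}` for all `2 < p < ∞`, with `C_{s₀}` independent of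
`z` and `p`. -/
theorem lemma_3_1
    (n m : ℕ) (hn : 0 < n) (hm : 0 < m)
    (grp : Fin n → Fin m) (hgrp : Function.Surjective grp)
    (l : Fin m → ℕ) (hl : ∀ k, l k = (Finset.univ.filter (fun i => grp i = k)).card)
    (a : Fin m → ℝ) (ha : ∀ k, 0 ≤ a k ∧ a k < l k)
    (S : (Fin n → ℝ) → ℝ) (c : (Fin n → ℕ) → ℝ)
    (hSc : HasTaylorSeriesAtOrigin S c) (hc : c ≠ 0)
    (hS0 : S 0 = 0) (hS1 : fderiv ℝ S 0 = 0)
    (a₀ : ℝ) (d₀ : ℕ) (ha₀ : IsSublevelExponent grp a c a₀ d₀)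
    (oS : ℕ) (hoS : newtonOrder c = (oS : ℕ∞))
    (g : ℝ) (hg : g = min a₀ (⨅ k, ((l k : ℝ) - a k)))
    (s₀ : ℝ) (hs₀neg : s₀ < 0) (hs₀ : max (-g) (-(1 / max (oS : ℝ) 2)) < s₀) :
    ∃ V ∈ 𝓝 (0 : Fin n → ℝ), ∀ K : (Fin n → ℝ) → ℝ,
      Function.support K ⊆ V → KernelBounds grp a K →
      ∃ C : ℝ, 0 ≤ C ∧ ∀ z : ℂ, z.re = s₀ → ∀ p : ℝ, 2 < p →
        ∀ f : SchwartzMap (Fin (n+1) → ℝ) ℂ,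
          eLpNorm (radonOpZ S K c z ⇑f) (ENNReal.ofReal p) volume ≤
            ENNReal.ofReal C * eLpNorm (⇑f) (ENNReal.ofReal p) volume := by
  have hs₀' : max (-g) (-1) < s₀ := by
    have horder : 1 / max (oS : ℝ) 2 ≤ 1 / 2 :=
      one_div_le_one_div_of_le two_pos (le_max_right _ _)
    exact (max_le_max_left _ (by linarith)).trans_lt hs₀
  obtain ⟨V, hV, hbound⟩ := lemma_3_1_general n m hn grp l hl a (fun k => (ha k).1) S c hSc a₀ d₀
    ha₀ g hg s₀ hs₀neg hs₀'
  refine ⟨V, hV, fun K hKV hK => ?_⟩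
  obtain ⟨A, hA⟩ := hK.exists_ae_abs_le
  obtain ⟨C, hC, hbound_z⟩ := hbound K hK.aestronglyMeasurable hKV A hA
  refine ⟨C, hC, fun z hz p hp f => hbound_z z hz _ ?_ f f.continuous.aestronglyMeasurable⟩
  exact ENNReal.one_le_ofReal.2 (by linarith)

end Paper
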